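/- arXiv:1808.10293 — 13 statements merged into one kernel-verified Lean document; each statement's English description precedes it below -/
import Mathlib

section
/- Let G be a (bounded integral) left-residuated po-groupoid satisfying the divisibility law (x/y)·y = (y/x)·x and the equation x·y = ¬(¬x/y) for all x, y. Define x ⊕ y = ¬(¬x·¬y). Then (G, ⊕, ¬, 0) is a basic algebra, i.e., it satisfies the equations x ⊕ 0 = x; ¬¬x = x; ¬(¬x ⊕ y) ⊕ y = ¬(¬y ⊕ x) ⊕ x; and ¬(¬(¬(x ⊕ y) ⊕ y) ⊕ z) ⊕ (x ⊕ z) = ¬0. -/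
/-!
The equation `x·y = ¬(¬x/y)` at `y = 1` makes negation involutive, so `x ⊕ y = x/¬y`. Hence
`¬(x ⊕ y) ⊕ y = ¬((x/¬y)·¬y)`. Divisibility makes `(x/¬y)·¬y` symmetric in `x` and `¬y`, which
gives the third equation of basic algebras. Residuation gives `(x/¬y)·¬y ≤ x`; the fourth
equation says that this inequality is preserved by `· ⊕ z`, because `a ≤ b` is equivalent to
`a·¬b = 0`, that is, to `¬a ⊕ b = ¬0`.
-/

/-- Bounded integral left-residuated po-groupoids: the least element is `⊥`, the greatest element
is the identity `1`, and `x / y` is the left residual of `x` by `y`. -/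
class LeftResiduatedPoGroupoid (G : Type*) extends
    MulOneClass G, Div G, PartialOrder G, OrderBot G where
  le_one (x : G) : x ≤ 1
  mul_le_iff_le_div (x y z : G) : x * y ≤ z ↔ x ≤ z / y

namespace LeftResiduatedPoGroupoid

variable {G : Type*} [LeftResiduatedPoGroupoid G] {x y : G}

/-- The negation `¬x = 0/x` of a left-residuated po-groupoid, written `∼x`. -/
def neg (x : G) : G := ⊥ / x

local prefix:max "∼" => neg

/-- The sum `x ⊕ y = ¬(¬x·¬y)` of the associated basic algebra, written `x ⊕ᵇ y` because `⊕` is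
taken by the sum of types. -/
def oplus (x y : G) : G := ∼(∼x * ∼y)

local infixl:65 "⊕ᵇ" => oplus

theorem gc_mul_div (y : G) : GaloisConnection (· * y) (· / y) :=
  fun x z => mul_le_iff_le_div x y z

theorem div_mul_le (x y : G) : x / y * y ≤ x :=
  (gc_mul_div y).l_u_le x

theorem div_le_div_of_le (h : x ≤ y) (z : G) : x / z ≤ y / z :=
  (gc_mul_div z).monotone_u h

protected theorem div_one (x : G) : x / 1 = x :=
  (gc_mul_div 1).u_unique GaloisConnection.id mul_one

protected theorem neg_one : ∼(1 : G) = ⊥ :=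
  LeftResiduatedPoGroupoid.div_one ⊥

theorem le_neg_iff_mul_eq_bot : x ≤ ∼y ↔ x * y = ⊥ := by
  rw [neg, ← mul_le_iff_le_div, le_bot_iff]

section MulEqNegDiv

variable (hmul : ∀ x y : G, x * y = ∼(∼x / y))
include hmul

protected theorem neg_neg (x : G) : ∼∼x = x := by
  have h := hmul x 1
  rwa [mul_one, LeftResiduatedPoGroupoid.div_one, eq_comm] at h

theorem neg_bot : ∼(⊥ : G) = 1 := by
  rw [← LeftResiduatedPoGroupoid.neg_one, LeftResiduatedPoGroupoid.neg_neg hmul]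

theorem oplus_eq_div_neg (x y : G) : x ⊕ᵇ y = x / ∼y := by
  simp only [oplus, hmul (∼x), LeftResiduatedPoGroupoid.neg_neg hmul]

theorem oplus_bot (x : G) : x ⊕ᵇ ⊥ = x := by
  rw [oplus_eq_div_neg hmul, neg_bot hmul, LeftResiduatedPoGroupoid.div_one]

theorem oplus_le_oplus_of_le (h : x ≤ y) (z : G) : x ⊕ᵇ z ≤ y ⊕ᵇ z := by
  simpa only [oplus_eq_div_neg hmul] using div_le_div_of_le h ∼z

theorem neg_oplus_oplus (x y : G) : ∼(x ⊕ᵇ y) ⊕ᵇ y = ∼(x / ∼y * ∼y) := by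
  rw [oplus, LeftResiduatedPoGroupoid.neg_neg hmul, oplus_eq_div_neg hmul]

theorem neg_neg_oplus_oplus_le (x y : G) : ∼(∼(x ⊕ᵇ y) ⊕ᵇ y) ≤ x := by
  rw [neg_oplus_oplus hmul, LeftResiduatedPoGroupoid.neg_neg hmul]
  exact div_mul_le x ∼y

theorem neg_oplus_eq_neg_bot_of_le (h : x ≤ y) : ∼x ⊕ᵇ y = ∼⊥ := by
  have mul_neg_eq_bot : x * ∼y = ⊥ := by
    rwa [← le_neg_iff_mul_eq_bot, LeftResiduatedPoGroupoid.neg_neg hmul]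
  rw [oplus, LeftResiduatedPoGroupoid.neg_neg hmul, mul_neg_eq_bot]

theorem neg_neg_oplus_oplus_comm (hdiv : ∀ x y : G, x / y * y = y / x * x) (x y : G) :
    ∼(∼x ⊕ᵇ y) ⊕ᵇ y = ∼(∼y ⊕ᵇ x) ⊕ᵇ x := by
  rw [neg_oplus_oplus hmul, neg_oplus_oplus hmul, hdiv]

theorem neg_oplus_oplus_oplus_eq_neg_bot (x y z : G) :
    ∼(∼(∼(x ⊕ᵇ y) ⊕ᵇ y) ⊕ᵇ z) ⊕ᵇ (x ⊕ᵇ z) = ∼⊥ :=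
  neg_oplus_eq_neg_bot_of_le hmul <|
    oplus_le_oplus_of_le hmul (neg_neg_oplus_oplus_le hmul x y) z

end MulEqNegDiv

end LeftResiduatedPoGroupoid

/-- A bounded integral left-residuated po-groupoid satisfying divisibility
`(x/y)·y = (y/x)·x` and `x·y = ¬(¬x/y)` gives a basic algebra via `x ⊕ y = ¬(¬x·¬y)`. -/
theorem stmt_0 {G : Type*} [PartialOrder G]
    (mul dvd : G → G → G) (z o : G)
    (hbot : ∀ x, z ≤ x) (htop : ∀ x, x ≤ o)
    (honer : ∀ x, mul x o = x) (honel : ∀ x, mul o x = x)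
    (hres : ∀ x y w, mul x y ≤ w ↔ x ≤ dvd w y)
    (neg : G → G) (hneg : ∀ x, neg x = dvd z x)
    (hdiv : ∀ x y, mul (dvd x y) y = mul (dvd y x) x)
    (hjk : ∀ x y, mul x y = neg (dvd (neg x) y))
    (op : G → G → G) (hop : ∀ x y, op x y = neg (mul (neg x) (neg y))) :
    (∀ x, op x z = x) ∧
    (∀ x, neg (neg x) = x) ∧
    (∀ x y, op (neg (op (neg x) y)) y = op (neg (op (neg y) x)) x) ∧
    (∀ x y w, op (neg (op (neg (op (neg (op x y)) y)) w)) (op x w) = neg z) := by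
  obtain rfl : neg = dvd z := funext hneg
  obtain rfl : op = fun x y => dvd z (mul (dvd z x) (dvd z y)) := funext₂ hop
  let _ : LeftResiduatedPoGroupoid G :=
    { ‹PartialOrder G› with
      mul := mul
      one := o
      div := dvd
      bot := z
      one_mul := honel
      mul_one := honer
      bot_le := hbot
      le_one := htop
      mul_le_iff_le_div := hres }
  exact ⟨LeftResiduatedPoGroupoid.oplus_bot hjk,
    LeftResiduatedPoGroupoid.neg_neg hjk,
    LeftResiduatedPoGroupoid.neg_neg_oplus_oplus_comm hjk hdiv,
    LeftResiduatedPoGroupoid.neg_oplus_oplus_oplus_eq_neg_bot hjk⟩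
end

section
/- Let (A, ⊕, ¬, 0) be a basic algebra. Set 1 = ¬0, define x·y = ¬(¬x ⊕ ¬y), x/y = x ⊕ ¬y, and define x ≤ y to mean ¬x ⊕ y = 1. Then ≤ is a partial order on A with least element 0 and greatest element 1, x·1 = x = 1·x for all x, the left residuation law x·y ≤ z ⇔ x ≤ z/y holds for all x, y, z, and moreover the divisibility law (x/y)·y = (y/x)·x and the equation x·y = ¬(¬x/y) hold; in addition 0/x = ¬x and x/¬y = x ⊕ y for all x, y. -/
/-!
In a basic algebra `(xᶜ + y)ᶜ + y` is the join of `x` and `y`: the third axiom says that it is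
symmetric, and the fourth that complementing it and adding `z` on the right yields at most `xᶜ + z`.
Special cases of these make `≤` a partial order for which complementation is antitone and addition
is monotone in its left argument. Hence `(· * y)` and `(· / y)` are monotone, and they
form a Galois connection: its unit `x ≤ x * y / y` holds because `x * y / y` is the join of `x` and
`yᶜ`, and its counit `x / y * y ≤ x` follows from divisibility, since `x / y * y = y / x * x` and a
product lies below its right factor.
-/

/-- A basic algebra `(A, ⊕, ¬, 0)`, with `⊕` written as `+` and `¬` as `ᶜ`. The constant `1 = ¬0`
appears unfolded in the last axiom. -/
class BasicAlgebra (A : Type*) extends Zero A, Add A, Compl A where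
  protected add_zero (x : A) : x + 0 = x
  protected compl_compl (x : A) : xᶜᶜ = x
  compl_compl_add_add_comm (x y : A) : (xᶜ + y)ᶜ + y = (yᶜ + x)ᶜ + x
  compl_add_add_add (x y w : A) : (((x + y)ᶜ + y)ᶜ + w)ᶜ + (x + w) = 0ᶜ

namespace BasicAlgebra

variable {A : Type*} [BasicAlgebra A]

/-- The unit `1 = ¬0`. -/
instance : One A := ⟨0ᶜ⟩

/-- The product `x·y = ¬(¬x ⊕ ¬y)`. -/
instance : Mul A := ⟨fun x y => (xᶜ + yᶜ)ᶜ⟩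

/-- The left residual `x/y = x ⊕ ¬y` of the product. -/
instance : Div A := ⟨fun x y => x + yᶜ⟩

/-- The relation `¬x ⊕ y = 1`, shown below to be a partial order. -/
instance : LE A := ⟨fun x y => xᶜ + y = 1⟩

theorem mul_def (x y : A) : x * y = (xᶜ + yᶜ)ᶜ := rfl

theorem div_def (x y : A) : x / y = x + yᶜ := rfl

protected theorem le_def {x y : A} : x ≤ y ↔ xᶜ + y = 1 := Iff.rfl

theorem compl_one : (1 : A)ᶜ = 0 := BasicAlgebra.compl_compl 0

theorem compl_add_add_add_self (x y : A) : (x + y)ᶜ + y + x = 1 := by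
  have h := compl_add_add_add x y 0
  rwa [BasicAlgebra.add_zero, BasicAlgebra.add_zero, BasicAlgebra.compl_compl] at h

theorem compl_one_add_add (x : A) : (1 + x)ᶜ + x = x := by
  have h := compl_compl_add_add_comm 0 x
  rwa [BasicAlgebra.add_zero, BasicAlgebra.add_zero, BasicAlgebra.compl_compl] at h

theorem add_one (x : A) : x + 1 = 1 := by
  simpa only [compl_one_add_add] using compl_add_add_add_self 1 x

theorem one_add (x : A) : 1 + x = 1 := by
  simpa only [add_one] using compl_add_add_add_self x 1

protected theorem zero_add (x : A) : 0 + x = x := by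
  simpa only [one_add, compl_one] using compl_one_add_add x

theorem compl_add_self (x : A) : xᶜ + x = 1 := by
  simpa only [BasicAlgebra.add_zero] using compl_add_add_add_self x 0

protected theorem le_trans {x y w : A} (hxy : x ≤ y) (hyw : y ≤ w) : x ≤ w := by
  rw [BasicAlgebra.le_def] at hxy hyw
  have h := compl_add_add_add xᶜ y w
  rwa [hxy, compl_one, BasicAlgebra.zero_add, hyw, compl_one, BasicAlgebra.zero_add] at h

protected theorem le_antisymm {x y : A} (hxy : x ≤ y) (hyx : y ≤ x) : x = y := by
  rw [BasicAlgebra.le_def] at hxy hyx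
  have h := compl_compl_add_add_comm y x
  rwa [hxy, hyx, compl_one, BasicAlgebra.zero_add, BasicAlgebra.zero_add] at h

instance : PartialOrder A where
  le_refl := compl_add_self
  le_trans _ _ _ := BasicAlgebra.le_trans
  le_antisymm _ _ := BasicAlgebra.le_antisymm

instance : BoundedOrder A where
  bot := 0
  bot_le := one_add
  top := 1
  le_top x := add_one xᶜ

theorem compl_antitone : Antitone (compl : A → A) := by
  intro x y hxy
  rw [BasicAlgebra.le_def] at hxy
  have h := compl_add_add_add_self xᶜ y
  rw [hxy, compl_one, BasicAlgebra.zero_add] at h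
  rwa [BasicAlgebra.le_def, BasicAlgebra.compl_compl]

theorem add_left_monotone (w : A) : Monotone (· + w) := by
  intro x y hxy
  have hyx : y + xᶜ = 1 := by
    simpa only [BasicAlgebra.le_def, BasicAlgebra.compl_compl] using compl_antitone hxy
  have h := compl_add_add_add y xᶜ w
  rwa [hyx, compl_one, BasicAlgebra.zero_add, BasicAlgebra.compl_compl] at h

theorem le_add_left_self (x y : A) : x ≤ y + x := by
  have h : 0 + x ≤ y + x := add_left_monotone x bot_le
  rwa [BasicAlgebra.zero_add] at h

theorem mul_le_right_self (x y : A) : x * y ≤ y := by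
  have h : x * y ≤ yᶜᶜ := compl_antitone (le_add_left_self yᶜ xᶜ)
  rwa [BasicAlgebra.compl_compl] at h

instance : MulOneClass A where
  mul_one x := by
    rw [mul_def, compl_one, BasicAlgebra.add_zero, BasicAlgebra.compl_compl]
  one_mul x := by
    rw [mul_def, compl_one, BasicAlgebra.zero_add, BasicAlgebra.compl_compl]

theorem mul_left_monotone (y : A) : Monotone (· * y) := fun _ _ h =>
  compl_antitone (add_left_monotone yᶜ (compl_antitone h))

theorem div_left_monotone (y : A) : Monotone (· / y) := add_left_monotone yᶜ

protected theorem div_mul_comm (x y : A) : x / y * y = y / x * x := by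
  have h := compl_compl_add_add_comm xᶜ yᶜ
  rw [BasicAlgebra.compl_compl, BasicAlgebra.compl_compl] at h
  exact congrArg compl h

theorem div_mul_le_self (x y : A) : x / y * y ≤ x :=
  BasicAlgebra.div_mul_comm x y ▸ mul_le_right_self (y / x) x

theorem le_mul_div_self (x y : A) : x ≤ x * y / y := by
  rw [div_def, mul_def, compl_compl_add_add_comm]
  exact le_add_left_self _ _

theorem mul_div_gc (y : A) : GaloisConnection (· * y) (· / y) :=
  .monotone_intro (div_left_monotone y) (mul_left_monotone y)
    (fun x => le_mul_div_self x y) (fun x => div_mul_le_self x y)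

theorem mul_eq_compl_compl_div (x y : A) : x * y = (xᶜ / y)ᶜ := rfl

protected theorem zero_div (x : A) : 0 / x = xᶜ := BasicAlgebra.zero_add xᶜ

theorem div_compl (x y : A) : x / yᶜ = x + y :=
  congrArg (x + ·) (BasicAlgebra.compl_compl y)

end BasicAlgebra

/-- Every basic algebra `(A, ⊕, ¬, 0)` yields a bounded integral
left-residuated po-groupoid via `1 = ¬0`, `x·y = ¬(¬x ⊕ ¬y)`, `x/y = x ⊕ ¬y`,
`x ≤ y ↔ ¬x ⊕ y = 1`, satisfying in addition divisibility, `x·y = ¬(¬x/y)`,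
`0/x = ¬x` and `x/¬y = x ⊕ y`. -/
theorem stmt_1 {A : Type*} (op : A → A → A) (neg : A → A) (z : A)
    (hba1 : ∀ x, op x z = x)
    (hba2 : ∀ x, neg (neg x) = x)
    (hba3 : ∀ x y, op (neg (op (neg x) y)) y = op (neg (op (neg y) x)) x)
    (hba4 : ∀ x y w, op (neg (op (neg (op (neg (op x y)) y)) w)) (op x w) = neg z)
    (o : A) (ho : o = neg z)
    (mul : A → A → A) (hmul : ∀ x y, mul x y = neg (op (neg x) (neg y)))
    (dvd : A → A → A) (hdvd : ∀ x y, dvd x y = op x (neg y))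
    (le : A → A → Prop) (hle : ∀ x y, le x y ↔ op (neg x) y = o) :
    (∀ x, le x x) ∧
    (∀ x y, le x y → le y x → x = y) ∧
    (∀ x y w, le x y → le y w → le x w) ∧
    (∀ x, le z x) ∧
    (∀ x, le x o) ∧
    (∀ x, mul x o = x) ∧
    (∀ x, mul o x = x) ∧
    (∀ x y w, le (mul x y) w ↔ le x (dvd w y)) ∧
    (∀ x y, mul (dvd x y) y = mul (dvd y x) x) ∧
    (∀ x y, mul x y = neg (dvd (neg x) y)) ∧
    (∀ x, dvd z x = neg x) ∧
    (∀ x y, dvd x (neg y) = op x y) := by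
  let : BasicAlgebra A :=
    { zero := z
      add := op
      compl := neg
      add_zero := hba1
      compl_compl := hba2
      compl_compl_add_add_comm := hba3
      compl_add_add_add := hba4 }
  subst ho
  obtain rfl : mul = (· * ·) := funext₂ hmul
  obtain rfl : dvd = (· / ·) := funext₂ hdvd
  obtain rfl : le = (· ≤ ·) := funext₂ fun x y => propext (hle x y)
  exact ⟨le_refl, fun _ _ => le_antisymm, fun _ _ _ => le_trans, fun _ => bot_le, fun _ => le_top,
    mul_one, one_mul, fun x y w => BasicAlgebra.mul_div_gc y x w, BasicAlgebra.div_mul_comm,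
    BasicAlgebra.mul_eq_compl_compl_div, BasicAlgebra.zero_div, BasicAlgebra.div_compl⟩
end

section
/- Let (G, ≤, ·, →, 0, 1) be a (bounded integral) contrapositionally residuated po-groupoid; write ∼x for x → 0. Then ∼∼x = x, ∼1 = 0 and ∼0 = 1; and defining x/y = ∼x → ∼y, the operation / satisfies the left residuation law x·y ≤ z ⇔ x ≤ z/y for all x, y, z, and 0/x = ∼x for all x. -/
section Negation

variable {G : Type*} {mul arr : G → G → G} {z o : G} {sim : G → G}

theorem sim_one (one_arr : ∀ x, arr o x = x) (sim_def : ∀ x, sim x = arr x z) : sim o = z :=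
  (sim_def o).trans (one_arr z)

theorem sim_sim [PartialOrder G] (mul_one : ∀ x, mul x o = x) (one_arr : ∀ x, arr o x = x)
    (sim_def : ∀ x, sim x = arr x z)
    (mul_le_iff : ∀ x y w, mul x y ≤ w ↔ x ≤ arr (sim w) (sim y)) (x : G) :
    sim (sim x) = x := by
  refine (eq_of_forall_le_iff fun a => ?_).symm
  -- The residuation law at `y = 1` compares the lower sets of `x` and `∼∼x`, because `∼1 = 0`.
  calc a ≤ x ↔ mul a o ≤ x := by rw [mul_one]
    _ ↔ a ≤ arr (sim x) (sim o) := mul_le_iff a o x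
    _ ↔ a ≤ sim (sim x) := by rw [sim_one one_arr sim_def, sim_def (sim x)]

theorem sim_zero (one_arr : ∀ x, arr o x = x) (sim_def : ∀ x, sim x = arr x z)
    (sim_involutive : Function.Involutive sim) : sim z = o :=
  sim_involutive.eq_iff.2 (sim_one one_arr sim_def).symm

end Negation

theorem stmt_3_general {G : Type*} [PartialOrder G]
    (mul arr : G → G → G) (z o : G)
    (honer : ∀ x, mul x o = x) (harr1 : ∀ x, arr o x = x)
    (sim : G → G) (hsim : ∀ x, sim x = arr x z)
    (hres : ∀ x y w, mul x y ≤ w ↔ x ≤ arr (sim w) (sim y))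
    (dvd : G → G → G) (hdvd : ∀ x y, dvd x y = arr (sim x) (sim y)) :
    (∀ x, sim (sim x) = x) ∧
    sim o = z ∧
    sim z = o ∧
    (∀ x y w, mul x y ≤ w ↔ x ≤ dvd w y) ∧
    (∀ x, dvd z x = sim x) := by
  have sim_involutive : Function.Involutive sim := sim_sim honer harr1 hsim hres
  have sim_z : sim z = o := sim_zero harr1 hsim sim_involutive
  refine ⟨sim_involutive, sim_one harr1 hsim, sim_z, fun x y w => ?_, fun x => ?_⟩
  · rw [hdvd, hres]
  · rw [hdvd, sim_z, harr1]

/-- In a bounded integral contrapositionally residuated po-groupoid,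
writing `∼x = x → 0`, we have `∼∼x = x`, `∼1 = 0`, `∼0 = 1`, and `x/y := ∼x → ∼y`
satisfies the left residuation law and `0/x = ∼x`. -/
theorem stmt_3 {G : Type*} [PartialOrder G]
    (mul arr : G → G → G) (z o : G)
    (hbot : ∀ x, z ≤ x) (htop : ∀ x, x ≤ o)
    (honer : ∀ x, mul x o = x) (honel : ∀ x, mul o x = x)
    (harr1 : ∀ x, arr o x = x)
    (sim : G → G) (hsim : ∀ x, sim x = arr x z)
    (hres : ∀ x y w, mul x y ≤ w ↔ x ≤ arr (sim w) (sim y))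
    (dvd : G → G → G) (hdvd : ∀ x y, dvd x y = arr (sim x) (sim y)) :
    (∀ x, sim (sim x) = x) ∧
    sim o = z ∧
    sim z = o ∧
    (∀ x y w, mul x y ≤ w ↔ x ≤ dvd w y) ∧
    (∀ x, dvd z x = sim x) :=
  stmt_3_general mul arr z o honer harr1 sim hsim hres dvd hdvd
end

section
/- For a (bounded integral) left-residuated po-groupoid G, the following are equivalent: (a) G satisfies the divisibility law (x/y)·y = (y/x)·x for all x, y; (b) for all x, y, one has x ≤ y if and only if x = z·y for some z; (c) for all x, y, the element (x/y)·y is the infimum of {x, y} in (G, ≤). -/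
namespace LeftResiduated

variable {G : Type*}

theorem mul_le_right [Preorder G] [Mul G] [One G] {y : G} (le_one : ∀ x : G, x ≤ 1)
    (one_mul : 1 * y = y) (mono : Monotone (· * y)) (x : G) : x * y ≤ y :=
  (mono (le_one x)).trans_eq one_mul

theorem div_eq_one_iff_le [PartialOrder G] [Mul G] [Div G] [One G] {x y : G}
    (le_one : ∀ z : G, z ≤ 1) (one_mul : 1 * x = x)
    (residuation : GaloisConnection (· * x) (· / x)) : y / x = 1 ↔ x ≤ y :=
  calc y / x = 1 ↔ 1 ≤ y / x := ⟨ge_of_eq, (le_one _).antisymm⟩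
    _ ↔ 1 * x ≤ y := (residuation 1 y).symm
    _ ↔ x ≤ y := by rw [one_mul]

theorem le_iff_exists_eq_mul_of_div_mul_comm [PartialOrder G] [Mul G] [Div G] [One G]
    (le_one : ∀ x : G, x ≤ 1) (one_mul : ∀ x : G, 1 * x = x)
    (residuation : ∀ y : G, GaloisConnection (· * y) (· / y))
    (div_mul_comm : ∀ x y : G, x / y * y = y / x * x) (x y : G) :
    x ≤ y ↔ ∃ w, x = w * y := by
  constructor
  · intro hxy
    have div_eq_one : y / x = 1 :=
      (div_eq_one_iff_le le_one (one_mul x) (residuation x)).mpr hxy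
    refine ⟨x / y, ?_⟩
    calc x = 1 * x := (one_mul x).symm
      _ = y / x * x := by rw [div_eq_one]
      _ = x / y * y := div_mul_comm y x
  · rintro ⟨w, rfl⟩
    exact mul_le_right le_one (one_mul y) (residuation y).monotone_l w

theorem isGLB_pair_div_mul_of_le_iff_exists_eq_mul [Preorder G] [Mul G] [Div G] {x y : G}
    (residuation : GaloisConnection (· * y) (· / y))
    (le_iff : ∀ u : G, u ≤ y ↔ ∃ w, u = w * y) :
    IsGLB {x, y} (x / y * y) := by
  constructor
  · rintro _ (rfl | rfl)
    · exact residuation.l_u_le _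
    · exact (le_iff _).mpr ⟨_, rfl⟩
  · intro u hu
    obtain ⟨hux, huy⟩ : u ≤ x ∧ u ≤ y := by simpa using hu
    -- Once `u` is written as `w * y`, residuation turns `u ≤ x` into `w ≤ x / y`.
    obtain ⟨w, rfl⟩ := (le_iff u).mp huy
    exact residuation.monotone_l (residuation.le_u hux)

theorem div_mul_comm_of_isGLB_pair [PartialOrder G] [Mul G] [Div G] {x y : G}
    (hxy : IsGLB {x, y} (x / y * y)) (hyx : IsGLB {y, x} (y / x * x)) :
    x / y * y = y / x * x :=
  hxy.unique (Set.pair_comm y x ▸ hyx)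

end LeftResiduated

open LeftResiduated in
theorem stmt_7_general {G : Type*} [PartialOrder G] [Mul G] [Div G] [One G]
    (le_one : ∀ x : G, x ≤ 1) (one_mul : ∀ x : G, 1 * x = x)
    (residuation : ∀ y : G, GaloisConnection (· * y) (· / y)) :
    List.TFAE [
      ∀ x y : G, x / y * y = y / x * x,
      ∀ x y : G, x ≤ y ↔ ∃ w, x = w * y,
      ∀ x y : G, IsGLB {x, y} (x / y * y)] := by
  tfae_have 1 → 2 := le_iff_exists_eq_mul_of_div_mul_comm le_one one_mul residuation
  tfae_have 2 → 3 := fun le_iff x y =>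
    isGLB_pair_div_mul_of_le_iff_exists_eq_mul (residuation y) (le_iff · y)
  tfae_have 3 → 1 := fun isGLB x y => div_mul_comm_of_isGLB_pair (isGLB x y) (isGLB y x)
  tfae_finish

/-- For a bounded integral left-residuated po-groupoid, the following
are equivalent: (a) divisibility `(x/y)·y = (y/x)·x`; (b) `x ≤ y` iff `x = z·y` for
some `z`; (c) `(x/y)·y` is the infimum of `{x, y}`. -/
theorem stmt_7 {G : Type*} [PartialOrder G]
    (mul dvd : G → G → G) (z o : G)
    (hbot : ∀ x, z ≤ x) (htop : ∀ x, x ≤ o)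
    (honer : ∀ x, mul x o = x) (honel : ∀ x, mul o x = x)
    (hres : ∀ x y w, mul x y ≤ w ↔ x ≤ dvd w y) :
    ((∀ x y, mul (dvd x y) y = mul (dvd y x) x) ↔
      (∀ x y, x ≤ y ↔ ∃ w, x = mul w y)) ∧
    ((∀ x y, x ≤ y ↔ ∃ w, x = mul w y) ↔
      (∀ x y, IsGLB ({x, y} : Set G) (mul (dvd x y) y))) := by
  have tfae := @stmt_7_general G _ ⟨mul⟩ ⟨dvd⟩ ⟨o⟩ htop honel fun y x w => hres x y w
  exact ⟨tfae.out 0 1, tfae.out 1 2⟩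
end

section
/- A (bounded integral) left-residuated po-groupoid G satisfies the double negation law ¬¬x = x together with the condition ¬x/y ≤ ¬z ⇔ z ≤ x·y (for all x, y, z) if and only if it satisfies the single equation x·y = ¬(¬x/y) for all x, y. In this case, x ≤ y if and only if ¬y ≤ ¬x, for all x, y. -/
/-!
Taking `y = 1` in `x·y = ¬(¬x/y)` gives the double negation law. Since `1 ≤ ¬b ↔ b ≤ 0`, the
equation then makes `¬` a Galois connection with itself:
`a ≤ ¬b ↔ a·b ≤ 0 ↔ ¬(¬a/b) ≤ 0 ↔ 1 ≤ ¬a/b ↔ b ≤ ¬a`. The remaining properties follow from this.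
Conversely, taking `y = 1` in `¬x/y ≤ ¬w ↔ w ≤ x·y` shows that `¬` is an order-reversing embedding,
so that `x·y` and `¬(¬x/y)` have the same lower bounds.
-/

section Preorder

variable {G : Type*} [Preorder G] {mul dvd : G → G → G} {z o : G} {neg : G → G}

theorem one_le_residual_iff (honel : ∀ x, mul o x = x)
    (hres : ∀ x y w, mul x y ≤ w ↔ x ≤ dvd w y) (x y : G) : o ≤ dvd y x ↔ x ≤ y := by
  rw [← hres, honel]

theorem le_neg_comm_of_mul_eq_neg_residual (honel : ∀ x, mul o x = x)
    (hres : ∀ x y w, mul x y ≤ w ↔ x ≤ dvd w y) (hneg : ∀ x, neg x = dvd z x)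
    (hnegneg : ∀ x, neg (neg x) = x) (hmul : ∀ x y, mul x y = neg (dvd (neg x) y)) (a b : G) :
    a ≤ neg b ↔ b ≤ neg a :=
  calc
    a ≤ neg b ↔ mul a b ≤ z := by rw [hneg, hres]
    _ ↔ neg (dvd (neg a) b) ≤ z := by rw [hmul]
    _ ↔ o ≤ neg (neg (dvd (neg a) b)) := by
      rw [hneg (neg _), one_le_residual_iff honel hres]
    _ ↔ o ≤ dvd (neg a) b := by rw [hnegneg]
    _ ↔ b ≤ neg a := one_le_residual_iff honel hres b (neg a)

end Preorder

section PartialOrder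

variable {G : Type*} [PartialOrder G] {mul dvd : G → G → G} {o : G} {neg : G → G}

theorem residual_one (honer : ∀ x, mul x o = x)
    (hres : ∀ x y w, mul x y ≤ w ↔ x ≤ dvd w y) (w : G) : dvd w o = w :=
  eq_of_forall_le_iff fun x => by rw [← hres, honer]

theorem neg_neg_of_mul_eq_neg_residual (honer : ∀ x, mul x o = x)
    (hres : ∀ x y w, mul x y ≤ w ↔ x ≤ dvd w y)
    (hmul : ∀ x y, mul x y = neg (dvd (neg x) y)) (x : G) : neg (neg x) = x :=
  calc
    neg (neg x) = neg (dvd (neg x) o) := by rw [residual_one honer hres]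
    _ = mul x o := (hmul x o).symm
    _ = x := honer x

theorem neg_le_neg_iff_of_residual_le_neg_iff (honer : ∀ x, mul x o = x)
    (hres : ∀ x y w, mul x y ≤ w ↔ x ≤ dvd w y)
    (hcap : ∀ x y w, dvd (neg x) y ≤ neg w ↔ w ≤ mul x y) (x w : G) :
    neg x ≤ neg w ↔ w ≤ x := by
  simpa only [honer, residual_one honer hres] using hcap x o w

theorem mul_eq_neg_residual_of_residual_le_neg_iff (honer : ∀ x, mul x o = x)
    (hres : ∀ x y w, mul x y ≤ w ↔ x ≤ dvd w y) (hnegneg : ∀ x, neg (neg x) = x)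
    (hcap : ∀ x y w, dvd (neg x) y ≤ neg w ↔ w ≤ mul x y) (x y : G) :
    mul x y = neg (dvd (neg x) y) :=
  eq_of_forall_le_iff fun w =>
    calc
      w ≤ mul x y ↔ dvd (neg x) y ≤ neg w := (hcap x y w).symm
      _ ↔ neg (neg (dvd (neg x) y)) ≤ neg w := by rw [hnegneg]
      _ ↔ w ≤ neg (dvd (neg x) y) := neg_le_neg_iff_of_residual_le_neg_iff honer hres hcap _ w

end PartialOrder

theorem stmt_8_general {G : Type*} [PartialOrder G]
    (mul dvd : G → G → G) (z o : G)
    (honer : ∀ x, mul x o = x) (honel : ∀ x, mul o x = x)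
    (hres : ∀ x y w, mul x y ≤ w ↔ x ≤ dvd w y)
    (neg : G → G) (hneg : ∀ x, neg x = dvd z x) :
    (((∀ x, neg (neg x) = x) ∧
        (∀ x y w, dvd (neg x) y ≤ neg w ↔ w ≤ mul x y)) ↔
      (∀ x y, mul x y = neg (dvd (neg x) y))) ∧
    ((∀ x y, mul x y = neg (dvd (neg x) y)) →
      ∀ x y, x ≤ y ↔ neg y ≤ neg x) := by
  have negneg_and_le_neg_comm (hmul : ∀ x y, mul x y = neg (dvd (neg x) y)) :
      (∀ x, neg (neg x) = x) ∧ ∀ a b, a ≤ neg b ↔ b ≤ neg a :=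
    have hnegneg := neg_neg_of_mul_eq_neg_residual honer hres hmul
    ⟨hnegneg, le_neg_comm_of_mul_eq_neg_residual honel hres hneg hnegneg hmul⟩
  refine ⟨⟨fun ⟨hnegneg, hcap⟩ => ?_, fun hmul => ?_⟩, fun hmul x y => ?_⟩
  · exact mul_eq_neg_residual_of_residual_le_neg_iff honer hres hnegneg hcap
  · obtain ⟨hnegneg, le_neg_comm⟩ := negneg_and_le_neg_comm hmul
    exact ⟨hnegneg, fun x y w => by rw [le_neg_comm, hmul]⟩
  · obtain ⟨hnegneg, le_neg_comm⟩ := negneg_and_le_neg_comm hmul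
    rw [le_neg_comm, hnegneg]

/-- A bounded integral left-residuated po-groupoid satisfies `¬¬x = x`
together with CAP (`¬x/y ≤ ¬z ↔ z ≤ x·y`) iff it satisfies `x·y = ¬(¬x/y)`;
in that case `x ≤ y ↔ ¬y ≤ ¬x`. -/
theorem stmt_8 {G : Type*} [PartialOrder G]
    (mul dvd : G → G → G) (z o : G)
    (hbot : ∀ x, z ≤ x) (htop : ∀ x, x ≤ o)
    (honer : ∀ x, mul x o = x) (honel : ∀ x, mul o x = x)
    (hres : ∀ x y w, mul x y ≤ w ↔ x ≤ dvd w y)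
    (neg : G → G) (hneg : ∀ x, neg x = dvd z x) :
    (((∀ x, neg (neg x) = x) ∧
        (∀ x y w, dvd (neg x) y ≤ neg w ↔ w ≤ mul x y)) ↔
      (∀ x y, mul x y = neg (dvd (neg x) y))) ∧
    ((∀ x y, mul x y = neg (dvd (neg x) y)) →
      ∀ x y, x ≤ y ↔ neg y ≤ neg x) :=
  stmt_8_general mul dvd z o honer honel hres neg hneg
end

section
/- Let G be a (bounded integral) left-residuated po-groupoid satisfying the divisibility law (x/y)·y = (y/x)·x and the equation x·y = ¬(¬x/y). Then for every a ∈ G, the map δ_a : x ↦ ¬x·a is an antitone involution on the principal ideal {x : x ≤ a}: for all x, ¬x·a = ¬(x/a) and ¬x·a ≤ a; if x ≤ y ≤ a then ¬y·a ≤ ¬x·a; and if x ≤ a then ¬(¬x·a)·a = x. -/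
/-!
Write `∼x` for the negation of `x`. The law `x * y = ∼(∼x / y)` at `y = 1` says that negation is an
involution, so it can be rewritten as `∼(x * y) = ∼x / y`. By divisibility and integrality, `x ≤ y`
gives `x = (x / y) * y`, whence `∼x = ∼(x / y) / y ≥ ⊥ / y = ∼y`: negation is antitone. Finally
`∼x * a = ∼(x / a)`, so applying `x ↦ ∼x * a` twice yields `(x / a) * a`, which is `x` when `x ≤ a`.
-/

/-- The left residuation law: right multiplication by `y` is left adjoint to right division by `y`.
A left-residuated po-groupoid also has a unit and bounds, which are kept out of this mixin. -/
class LeftResiduated (G : Type*) [LE G] [Mul G] [Div G] : Prop where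
  mul_le_iff_le_div (x y z : G) : x * y ≤ z ↔ x ≤ z / y

namespace LeftResiduated

variable {G : Type*}

/-- The negation `0 / x` of a residuated structure, whose least element `0` is written `⊥`. -/
def neg [Bot G] [Div G] (x : G) : G := ⊥ / x

local prefix:max "∼" => neg

section Preorder

variable [Preorder G] [Div G]

theorem gc_mul_div [Mul G] [LeftResiduated G] (y : G) : GaloisConnection (· * y) (· / y) :=
  fun x z => mul_le_iff_le_div x y z

instance mulRightMono [Mul G] [LeftResiduated G] : MulRightMono G where
  elim y _ _ h := (gc_mul_div y).monotone_l h

theorem one_le_div_of_le [MulOneClass G] [LeftResiduated G] {x y : G} (h : x ≤ y) : 1 ≤ y / x :=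
  (mul_le_iff_le_div 1 x y).1 ((one_mul x).trans_le h)

end Preorder

variable [PartialOrder G] [MulOneClass G] [Div G] [LeftResiduated G]

protected theorem div_one (x : G) : x / 1 = x :=
  eq_of_forall_le_iff fun y => by rw [← mul_le_iff_le_div, mul_one]

theorem div_mul_cancel_of_le (le_one : ∀ x : G, x ≤ 1)
    (div_mul_comm : ∀ x y : G, x / y * y = y / x * x) {x y : G} (h : x ≤ y) :
    x / y * y = x := by
  have div_eq_one : y / x = 1 := (le_one _).antisymm (one_le_div_of_le h)
  rw [div_mul_comm, div_eq_one, one_mul]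

section Bot

variable [Bot G]

protected theorem neg_neg (mul_eq : ∀ x y : G, x * y = ∼(∼x / y)) (x : G) : ∼∼x = x := by
  simpa only [mul_one, LeftResiduated.div_one] using (mul_eq x 1).symm

protected theorem neg_mul (mul_eq : ∀ x y : G, x * y = ∼(∼x / y)) (x y : G) :
    ∼x * y = ∼(x / y) := by
  rw [mul_eq, LeftResiduated.neg_neg mul_eq]

protected theorem neg_div (mul_eq : ∀ x y : G, x * y = ∼(∼x / y)) (x y : G) :
    ∼x / y = ∼(x * y) := by
  rw [mul_eq, LeftResiduated.neg_neg mul_eq]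

theorem neg_mul_neg_mul_of_le (le_one : ∀ x : G, x ≤ 1)
    (div_mul_comm : ∀ x y : G, x / y * y = y / x * x)
    (mul_eq : ∀ x y : G, x * y = ∼(∼x / y)) {x a : G} (h : x ≤ a) :
    ∼(∼x * a) * a = x := by
  rw [LeftResiduated.neg_mul mul_eq x, LeftResiduated.neg_neg mul_eq,
    div_mul_cancel_of_le le_one div_mul_comm h]

end Bot

theorem neg_antitone [OrderBot G] (le_one : ∀ x : G, x ≤ 1)
    (div_mul_comm : ∀ x y : G, x / y * y = y / x * x)
    (mul_eq : ∀ x y : G, x * y = ∼(∼x / y)) : Antitone (neg : G → G) := fun x y h =>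
  calc
    ∼y ≤ ∼(x / y) / y := (gc_mul_div y).monotone_u bot_le
    _ = ∼(x / y * y) := LeftResiduated.neg_div mul_eq _ _
    _ = ∼x := by rw [div_mul_cancel_of_le le_one div_mul_comm h]

end LeftResiduated

/-- In a bounded integral left-residuated po-groupoid satisfying
divisibility and `x·y = ¬(¬x/y)`, for every `a` the map `δ_a : x ↦ ¬x·a` is an
antitone involution on the principal ideal `(a]`. -/
theorem stmt_9 {G : Type*} [PartialOrder G]
    (mul dvd : G → G → G) (z o : G)
    (hbot : ∀ x, z ≤ x) (htop : ∀ x, x ≤ o)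
    (honer : ∀ x, mul x o = x) (honel : ∀ x, mul o x = x)
    (hres : ∀ x y w, mul x y ≤ w ↔ x ≤ dvd w y)
    (neg : G → G) (hneg : ∀ x, neg x = dvd z x)
    (hdiv : ∀ x y, mul (dvd x y) y = mul (dvd y x) x)
    (hjk : ∀ x y, mul x y = neg (dvd (neg x) y)) :
    ∀ a : G,
      (∀ x, mul (neg x) a = neg (dvd x a)) ∧
      (∀ x, mul (neg x) a ≤ a) ∧
      (∀ x y, x ≤ y → y ≤ a → mul (neg y) a ≤ mul (neg x) a) ∧
      (∀ x, x ≤ a → mul (neg (mul (neg x) a)) a = x) := by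
  obtain rfl : neg = fun x => dvd z x := funext hneg
  let _ : MulOneClass G := { mul := mul, one := o, one_mul := honel, mul_one := honer }
  let _ : Div G := ⟨dvd⟩
  let _ : OrderBot G := { bot := z, bot_le := hbot }
  have : LeftResiduated G := ⟨hres⟩
  exact fun a => ⟨fun x => LeftResiduated.neg_mul hjk x a,
    fun x => mul_le_of_le_one_left' (htop _),
    fun x y hxy _ => mul_le_mul_left (LeftResiduated.neg_antitone htop hdiv hjk hxy) a,
    fun x hxa => LeftResiduated.neg_mul_neg_mul_of_le htop hdiv hjk hxa⟩
end

section
/- Let G be a (bounded integral) left-residuated po-groupoid satisfying the divisibility law (x/y)·y = (y/x)·x and the equation x·y = ¬(¬x/y). Then the underlying poset of G is a lattice: for all x, y, the element (x/y)·y is the infimum of {x, y} and the element ¬((¬x/¬y)·¬y) is the supremum of {x, y}. -/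
/-!
If `w ≤ y` then `y / w = 1`, so divisibility gives `w = (w / y) · y`; since `(· / y) · y` is
monotone, every lower bound `w` of `x` and `y` lies below `(x / y) · y`. The equation
`x · y = ¬(¬x / y)` makes the negation an antitone involution, which turns meets into joins.
-/

section AntitoneInvolution

variable {α : Type*} [Preorder α] {f : α → α} {s : Set α} {a : α}

theorem isLUB_of_isGLB_image_antitone_involutive (hf : Antitone f) (hinv : Function.Involutive f)
    (ha : IsGLB (f '' s) a) : IsLUB s (f a) := by
  constructor
  · intro x hx
    simpa only [hinv x] using hf (ha.1 (Set.mem_image_of_mem f hx))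
  · intro b hb
    simpa only [hinv b] using hf (ha.2 (hf.mem_lowerBounds_image hb))

end AntitoneInvolution

/-- The left residuation law: `div` is the left residual of the (not necessarily associative)
multiplication `mul`, so that `div w y` is the largest `x` with `mul x y ≤ w`. -/
def IsLeftResiduated {G : Type*} [LE G] (mul div : G → G → G) : Prop :=
  ∀ x y w, mul x y ≤ w ↔ x ≤ div w y

namespace IsLeftResiduated

section Preorder

variable {G : Type*} [Preorder G] {mul div : G → G → G}

theorem galoisConnection (h : IsLeftResiduated mul div) (y : G) :
    GaloisConnection (mul · y) (div · y) :=
  fun x w => h x y w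

theorem div_mul_le (h : IsLeftResiduated mul div) (x y : G) : mul (div x y) y ≤ x :=
  (h.galoisConnection y).l_u_le x

theorem monotone_div_mul (h : IsLeftResiduated mul div) (y : G) :
    Monotone fun x => mul (div x y) y :=
  (h.galoisConnection y).monotone_l.comp (h.galoisConnection y).monotone_u

end Preorder

variable {G : Type*} [PartialOrder G] {mul div : G → G → G} {zero one : G}

theorem div_eq_one_of_le (h : IsLeftResiduated mul div) (one_top : IsTop one)
    (one_mul : ∀ x, mul one x = x) {x y : G} (hxy : x ≤ y) : div y x = one := by
  refine (one_top _).antisymm ((h _ _ _).1 ?_)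
  rwa [one_mul]

theorem div_one (h : IsLeftResiduated mul div) (mul_one : ∀ x, mul x one = x) (x : G) :
    div x one = x :=
  eq_of_forall_le_iff fun w => by rw [← h, mul_one]

theorem div_mul_eq_of_le (h : IsLeftResiduated mul div) (one_top : IsTop one)
    (one_mul : ∀ x, mul one x = x) (div_mul_comm : ∀ x y, mul (div x y) y = mul (div y x) x)
    {w y : G} (hwy : w ≤ y) : mul (div w y) y = w := by
  rw [div_mul_comm, h.div_eq_one_of_le one_top one_mul hwy, one_mul]

theorem isGLB_div_mul (h : IsLeftResiduated mul div) (one_top : IsTop one)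
    (one_mul : ∀ x, mul one x = x) (div_mul_comm : ∀ x y, mul (div x y) y = mul (div y x) x)
    (x y : G) : IsGLB {x, y} (mul (div x y) y) := by
  constructor
  · rintro a (rfl | rfl)
    · exact h.div_mul_le a y
    · exact (div_mul_comm x a).trans_le (h.div_mul_le a x)
  · intro w hw
    have hwx : w ≤ x := hw (Set.mem_insert x {y})
    have hwy : w ≤ y := hw (Set.mem_insert_of_mem x rfl)
    calc w = mul (div w y) y := (h.div_mul_eq_of_le one_top one_mul div_mul_comm hwy).symm
      _ ≤ mul (div x y) y := h.monotone_div_mul y hwx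

theorem involutive_zero_div (h : IsLeftResiduated mul div) (mul_one : ∀ x, mul x one = x)
    (mul_eq : ∀ x y, mul x y = div zero (div (div zero x) y)) :
    Function.Involutive (div zero) := fun x =>
  calc div zero (div zero x) = div zero (div (div zero x) one) := by rw [h.div_one mul_one]
    _ = mul x one := (mul_eq x one).symm
    _ = x := mul_one x

theorem antitone_zero_div (h : IsLeftResiduated mul div) (one_top : IsTop one)
    (one_mul : ∀ x, mul one x = x) (mul_one : ∀ x, mul x one = x)
    (mul_eq : ∀ x y, mul x y = div zero (div (div zero x) y)) :
    Antitone (div zero) := by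
  intro x y hxy
  have neg_mul_eq_zero : mul (div zero y) x = zero :=
    calc mul (div zero y) x = div zero (div (div zero (div zero y)) x) := mul_eq _ _
      _ = div zero (div y x) := by rw [h.involutive_zero_div mul_one mul_eq y]
      _ = div zero one := by rw [h.div_eq_one_of_le one_top one_mul hxy]
      _ = zero := h.div_one mul_one zero
  exact (h _ _ _).1 neg_mul_eq_zero.le

end IsLeftResiduated

/-- In a bounded integral left-residuated po-groupoid satisfying
divisibility and `x·y = ¬(¬x/y)`, the underlying poset is a lattice with
`x ∧ y = (x/y)·y` and `x ∨ y = ¬((¬x/¬y)·¬y)`. -/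
theorem stmt_10 {G : Type*} [PartialOrder G]
    (mul dvd : G → G → G) (z o : G)
    (hbot : ∀ x, z ≤ x) (htop : ∀ x, x ≤ o)
    (honer : ∀ x, mul x o = x) (honel : ∀ x, mul o x = x)
    (hres : ∀ x y w, mul x y ≤ w ↔ x ≤ dvd w y)
    (neg : G → G) (hneg : ∀ x, neg x = dvd z x)
    (hdiv : ∀ x y, mul (dvd x y) y = mul (dvd y x) x)
    (hjk : ∀ x y, mul x y = neg (dvd (neg x) y)) :
    ∀ x y : G,
      IsGLB ({x, y} : Set G) (mul (dvd x y) y) ∧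
      IsLUB ({x, y} : Set G) (neg (mul (dvd (neg x) (neg y)) (neg y))) := by
  obtain rfl : neg = dvd z := funext hneg
  have h : IsLeftResiduated mul dvd := hres
  have neg_antitone : Antitone (dvd z) := h.antitone_zero_div htop honel honer hjk
  have neg_involutive : Function.Involutive (dvd z) := h.involutive_zero_div honer hjk
  have meet : ∀ x y, IsGLB {x, y} (mul (dvd x y) y) := h.isGLB_div_mul htop honel hdiv
  intro x y
  refine ⟨meet x y, isLUB_of_isGLB_image_antitone_involutive neg_antitone neg_involutive ?_⟩
  rw [Set.image_pair]
  exact meet (dvd z x) (dvd z y)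
end

section
/- Let G be a (bounded integral) left-residuated po-groupoid satisfying the double negation law ¬¬x = x and the equation (x → y) → y = (y → x) → x, where x → y = ¬x/¬y. Then for all x, y: 1 → x = x, and x ≤ y → x. -/
section LeftResidual

variable {G : Type*} {mul dvd : G → G → G}

theorem leftResidual_mono [Preorder G] (hres : ∀ x y w, mul x y ≤ w ↔ x ≤ dvd w y) (y : G) :
    Monotone fun w => dvd w y :=
  GaloisConnection.monotone_u (l := fun x => mul x y) fun x w => hres x y w

theorem leftResidual_one [PartialOrder G] {o : G} (honer : ∀ x, mul x o = x)
    (hres : ∀ x y w, mul x y ≤ w ↔ x ≤ dvd w y) (w : G) : dvd w o = w :=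
  eq_of_forall_le_iff fun x => by rw [← hres, honer]

end LeftResidual

theorem stmt_11_general {G : Type*} [PartialOrder G]
    (mul dvd : G → G → G) (z o : G)
    (hbot : ∀ x, z ≤ x)
    (honer : ∀ x, mul x o = x)
    (hres : ∀ x y w, mul x y ≤ w ↔ x ≤ dvd w y)
    (neg : G → G) (hneg : ∀ x, neg x = dvd z x)
    (arr : G → G → G) (harr : ∀ x y, arr x y = dvd (neg x) (neg y))
    (hdn : ∀ x, neg (neg x) = x) :
    (∀ x, arr o x = x) ∧
    (∀ x y, x ≤ arr y x) := by
  have residual_zero_neg (x : G) : dvd z (neg x) = x := by rw [← hneg, hdn]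
  have neg_one : neg o = z := (hneg o).trans (leftResidual_one honer hres z)
  refine ⟨fun x => ?_, fun x y => ?_⟩
  · rw [harr, neg_one, residual_zero_neg]
  · calc
      x = dvd z (neg x) := (residual_zero_neg x).symm
      _ ≤ dvd (neg y) (neg x) := leftResidual_mono hres (neg x) (hbot (neg y))
      _ = arr y x := (harr y x).symm

/-- In a bounded integral left-residuated po-groupoid with `¬¬x = x`
and `(x → y) → y = (y → x) → x` (where `x → y = ¬x/¬y`): `1 → x = x` and `x ≤ y → x`. -/
theorem stmt_11 {G : Type*} [PartialOrder G]
    (mul dvd : G → G → G) (z o : G)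
    (hbot : ∀ x, z ≤ x) (htop : ∀ x, x ≤ o)
    (honer : ∀ x, mul x o = x) (honel : ∀ x, mul o x = x)
    (hres : ∀ x y w, mul x y ≤ w ↔ x ≤ dvd w y)
    (neg : G → G) (hneg : ∀ x, neg x = dvd z x)
    (arr : G → G → G) (harr : ∀ x y, arr x y = dvd (neg x) (neg y))
    (hdn : ∀ x, neg (neg x) = x)
    (hw : ∀ x y, arr (arr x y) y = arr (arr y x) x) :
    (∀ x, arr o x = x) ∧
    (∀ x y, x ≤ arr y x) :=
  stmt_11_general mul dvd z o hbot honer hres neg hneg arr harr hdn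
end

section
/- Let G be a (bounded integral) left-residuated po-groupoid satisfying the double negation law ¬¬x = x and the equation (x → y) → y = (y → x) → x, where x → y = ¬x/¬y. Then the underlying poset of G is a join-semilattice in which, for all x, y, the element (x → y) → y is the supremum of {x, y}. -/
/-!
The element `(x → y) → y` is above `y` because `y ≤ a → y` always holds, and above `x` by the
Łukasiewicz law. If `x, y ≤ u`, then antitonicity of `→` in its first argument, used twice, gives
`(x → y) → y ≤ (u → y) → y = (y → u) → u = 1 → u = u`.
Antitonicity of `→` rests on that of `¬`, which residuation alone does not provide. The Łukasiewicz
law does: if `x → y = 1`, then `y = 1 → y = (x → y) → y = (y → x) → x ≥ x`; now apply this to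
`¬y → ¬x = y / x`, which is `1` as soon as `x ≤ y`.
-/

section

variable {G : Type*}

/-- The Łukasiewicz law `(x → y) → y = (y → x) → x` for a binary operation `→`. -/
def LukasiewiczLaw (imp : G → G → G) : Prop :=
  ∀ x y, imp (imp x y) y = imp (imp y x) x

namespace LukasiewiczLaw

variable [Preorder G] {imp : G → G → G} {o : G}

theorem le_imp_imp_left (h : LukasiewiczLaw imp) (le_imp : ∀ a y, y ≤ imp a y) (x y : G) :
    x ≤ imp (imp x y) y :=
  (le_imp (imp y x) x).trans_eq (h y x)

theorem le_of_imp_eq_top (h : LukasiewiczLaw imp) (le_imp : ∀ a y, y ≤ imp a y)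
    (top_imp : ∀ x, imp o x = x) {x y : G} (hxy : imp x y = o) : x ≤ y :=
  calc
    x ≤ imp (imp x y) y := h.le_imp_imp_left le_imp x y
    _ = y := by rw [hxy, top_imp]

theorem isLUB_imp_imp (h : LukasiewiczLaw imp) (le_imp : ∀ a y, y ≤ imp a y)
    (top_imp : ∀ x, imp o x = x) (imp_eq_top : ∀ x y, x ≤ y → imp x y = o)
    (imp_antitone : ∀ c, Antitone (imp · c)) (x y : G) :
    IsLUB {x, y} (imp (imp x y) y) := by
  refine ⟨?_, fun u hu => ?_⟩
  · rintro _ (rfl | rfl)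
    · exact h.le_imp_imp_left le_imp _ y
    · exact le_imp _ _
  · have hxu : x ≤ u := hu (Set.mem_insert x {y})
    have hyu : y ≤ u := hu (Set.mem_insert_of_mem x rfl)
    calc
      imp (imp x y) y ≤ imp (imp u y) y := imp_antitone y (imp_antitone y hxu)
      _ = imp (imp y u) u := h u y
      _ = u := by rw [imp_eq_top y u hyu, top_imp]

end LukasiewiczLaw

/-- The negation `¬x = 0 / x` determined by the residual `dvd` (that is, `/`) and `z` (that is,
`0`). -/
def residualNeg (dvd : G → G → G) (z x : G) : G :=
  dvd z x

/-- The implication `x → y = ¬x / ¬y` determined by the residual `dvd` (that is, `/`) and `z`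
(that is, `0`). -/
def residualImp (dvd : G → G → G) (z x y : G) : G :=
  dvd (residualNeg dvd z x) (residualNeg dvd z y)

/-- The left residuation law `x * y ≤ w ↔ x ≤ w / y`, expressed as a Galois connection for each
fixed `y`. -/
def LeftResiduated_s13 [Preorder G] (mul dvd : G → G → G) : Prop :=
  ∀ y, GaloisConnection (mul · y) (dvd · y)

theorem one_residualImp {dvd : G → G → G} {z o : G} (div_one : ∀ w, dvd w o = w)
    (neg_neg : Function.Involutive (residualNeg dvd z)) (x : G) :
    residualImp dvd z o x = x :=
  calc
    residualImp dvd z o x = residualNeg dvd z (residualNeg dvd z x) :=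
      congrArg (dvd · (residualNeg dvd z x)) (div_one z)
    _ = x := neg_neg x

namespace LeftResiduated_s13

section Preorder

variable [Preorder G] {mul dvd : G → G → G} {z : G}

theorem le_residualImp (h : LeftResiduated_s13 mul dvd) (hz : IsBot z)
    (neg_neg : Function.Involutive (residualNeg dvd z)) (a y : G) :
    y ≤ residualImp dvd z a y :=
  calc
    y = dvd z (residualNeg dvd z y) := (neg_neg y).symm
    _ ≤ dvd (residualNeg dvd z a) (residualNeg dvd z y) := (h _).monotone_u (hz _)

theorem residualImp_antitone (h : LeftResiduated_s13 mul dvd)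
    (neg_antitone : Antitone (residualNeg dvd z)) (c : G) :
    Antitone (residualImp dvd z · c) :=
  (h _).monotone_u.comp_antitone neg_antitone

end Preorder

variable [PartialOrder G] {mul dvd : G → G → G} {z o : G}

theorem div_eq_top_of_le (h : LeftResiduated_s13 mul dvd) (ho : IsTop o)
    (one_mul : ∀ x, mul o x = x) {x y : G} (hxy : x ≤ y) : dvd y x = o :=
  (ho _).antisymm ((h x).le_u ((one_mul x).trans_le hxy))

theorem div_one_s13 (h : LeftResiduated_s13 mul dvd) (mul_one : ∀ x, mul x o = x) (w : G) :
    dvd w o = w :=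
  le_antisymm ((mul_one _).symm.trans_le ((h o).l_u_le w)) ((h o).le_u (mul_one w).le)

theorem residualNeg_antitone (h : LeftResiduated_s13 mul dvd) (hz : IsBot z) (ho : IsTop o)
    (mul_one : ∀ x, mul x o = x) (one_mul : ∀ x, mul o x = x)
    (neg_neg : Function.Involutive (residualNeg dvd z))
    (law : LukasiewiczLaw (residualImp dvd z)) : Antitone (residualNeg dvd z) := by
  intro x y hxy
  have imp_neg_neg : residualImp dvd z (residualNeg dvd z y) (residualNeg dvd z x) = o := by
    rw [residualImp, neg_neg, neg_neg, h.div_eq_top_of_le ho one_mul hxy]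
  exact law.le_of_imp_eq_top (h.le_residualImp hz neg_neg)
    (one_residualImp (h.div_one_s13 mul_one) neg_neg) imp_neg_neg

end LeftResiduated_s13

end

/-- In a bounded integral left-residuated po-groupoid with `¬¬x = x`
and `(x → y) → y = (y → x) → x` (where `x → y = ¬x/¬y`), the underlying poset is a
join-semilattice in which `(x → y) → y` is the supremum of `{x, y}`. -/
theorem stmt_13 {G : Type*} [PartialOrder G]
    (mul dvd : G → G → G) (z o : G)
    (hbot : ∀ x, z ≤ x) (htop : ∀ x, x ≤ o)
    (honer : ∀ x, mul x o = x) (honel : ∀ x, mul o x = x)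
    (hres : ∀ x y w, mul x y ≤ w ↔ x ≤ dvd w y)
    (neg : G → G) (hneg : ∀ x, neg x = dvd z x)
    (arr : G → G → G) (harr : ∀ x y, arr x y = dvd (neg x) (neg y))
    (hdn : ∀ x, neg (neg x) = x)
    (hw : ∀ x y, arr (arr x y) y = arr (arr y x) x) :
    ∀ x y : G, IsLUB ({x, y} : Set G) (arr (arr x y) y) := by
  obtain rfl : neg = residualNeg dvd z := funext hneg
  obtain rfl : arr = residualImp dvd z := funext₂ harr
  have residuated : LeftResiduated_s13 mul dvd := fun y x w => hres x y w
  have neg_antitone : Antitone (residualNeg dvd z) :=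
    residuated.residualNeg_antitone hbot htop honer honel hdn hw
  have imp_eq_top (x y : G) (hxy : x ≤ y) : residualImp dvd z x y = o :=
    residuated.div_eq_top_of_le htop honel (neg_antitone hxy)
  exact LukasiewiczLaw.isLUB_imp_imp hw
    (residuated.le_residualImp hbot hdn)
    (one_residualImp (residuated.div_one_s13 honer) hdn)
    imp_eq_top
    (residuated.residualImp_antitone neg_antitone)
end

section
/- Let G be a (bounded integral) left-residuated po-groupoid satisfying the double negation law ¬¬x = x and the equation (x → y) → y = (y → x) → x, where x → y = ¬x/¬y. Then for every a ∈ G, the map γ_a : x ↦ x → a is an antitone involution on the principal filter {x : a ≤ x}: for all x, a ≤ x → a; if a ≤ x ≤ y then y → a ≤ x → a; and if a ≤ x then (x → a) → a = x. -/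
/-!
Since `1` is both a left identity and the top element, `y / x = 1` means `x ≤ y`, so `x → y = 1`
means `¬y ≤ ¬x`. In that case the law `(x → y) → y = (y → x) → x` collapses to
`y = (y → x) → x`, whose right-hand side is above `x`. So `¬` reflects the order, and being an
involution it is antitone. Hence `x ↦ x → a` is antitone, and for `a ≤ x` the same collapse reads
`x = (x → a) → a`.
-/

/-- A left-residuated po-groupoid with a left identity `1` that is also its greatest element, and
an arbitrary distinguished element `0` from which the negation `0 / x` is formed. -/
class IntegralLeftResiduated (G : Type*) [PartialOrder G] extends Mul G, Div G, Zero G, One G where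
  protected le_one (x : G) : x ≤ 1
  protected one_mul (x : G) : 1 * x = x
  mul_le_iff_le_div (x y w : G) : x * y ≤ w ↔ x ≤ w / y

/-- The negation `¬x = 0 / x`, written `∼x` below. -/
def IntegralLeftResiduated.neg {G : Type*} [PartialOrder G] [IntegralLeftResiduated G] (x : G) :
    G :=
  0 / x

local prefix:max "∼" => IntegralLeftResiduated.neg

/-- The implication `x → y = ¬x / ¬y`, written `x ⇝ y` below. -/
def IntegralLeftResiduated.imp {G : Type*} [PartialOrder G] [IntegralLeftResiduated G] (x y : G) :
    G :=
  ∼x / ∼y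

local infixr:60 "⇝" => IntegralLeftResiduated.imp

namespace IntegralLeftResiduated

variable {G : Type*} [PartialOrder G] [IntegralLeftResiduated G]

theorem div_mul_le (x y : G) : x / y * y ≤ x :=
  (mul_le_iff_le_div _ _ _).2 le_rfl

theorem mul_le_right (x y : G) : x * y ≤ y := by
  have one_le_div_self : 1 ≤ y / y :=
    (mul_le_iff_le_div _ _ _).1 (IntegralLeftResiduated.one_mul y).le
  exact (mul_le_iff_le_div _ _ _).2 ((IntegralLeftResiduated.le_one x).trans one_le_div_self)

theorem div_le_div_right {x y : G} (h : x ≤ y) (w : G) : x / w ≤ y / w :=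
  (mul_le_iff_le_div _ _ _).1 ((div_mul_le x w).trans h)

theorem div_eq_one_iff {x y : G} : x / y = 1 ↔ y ≤ x := by
  rw [← (IntegralLeftResiduated.le_one (x / y)).ge_iff_eq, ← mul_le_iff_le_div,
    IntegralLeftResiduated.one_mul]

theorem neg_eq_one_iff {x : G} : ∼x = 1 ↔ x ≤ 0 :=
  div_eq_one_iff

theorem imp_eq_one_iff {x y : G} : x ⇝ y = 1 ↔ ∼y ≤ ∼x :=
  div_eq_one_iff

section Involutive

variable (neg_invol : Function.Involutive (neg : G → G))
include neg_invol

theorem neg_one : ∼(1 : G) = 0 := by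
  rw [← neg_eq_one_iff.2 (le_refl (0 : G)), neg_invol]

theorem one_imp (x : G) : 1 ⇝ x = x :=
  calc
    1 ⇝ x = ∼∼x := congrArg (· / ∼x) (neg_one neg_invol)
    _ = x := neg_invol x

theorem mul_neg_le_zero (x : G) : x * ∼x ≤ 0 :=
  (mul_le_iff_le_div _ _ _).2 (neg_invol x).ge

theorem eq_zero_of_le_zero {x : G} (h : x ≤ 0) : x = 0 := by
  rw [← neg_invol x, neg_eq_one_iff.2 h, neg_one neg_invol]

theorem zero_le (x : G) : 0 ≤ x :=
  calc
    0 = ∼x * ∼∼x := (eq_zero_of_le_zero neg_invol (mul_neg_le_zero neg_invol _)).symm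
    _ ≤ ∼∼x := mul_le_right _ _
    _ = x := neg_invol x

theorem le_imp (x y : G) : x ≤ y ⇝ x :=
  (mul_le_iff_le_div _ _ _).1 ((mul_neg_le_zero neg_invol x).trans (zero_le neg_invol _))

variable (imp_imp_comm : ∀ x y : G, (x ⇝ y) ⇝ y = (y ⇝ x) ⇝ x)
include imp_imp_comm

theorem imp_imp_eq_of_neg_le_neg {x y : G} (h : ∼y ≤ ∼x) : (y ⇝ x) ⇝ x = y := by
  rw [← imp_imp_comm, imp_eq_one_iff.2 h, one_imp neg_invol]

theorem le_of_neg_le_neg {x y : G} (h : ∼y ≤ ∼x) : x ≤ y :=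
  calc
    x ≤ (y ⇝ x) ⇝ x := le_imp neg_invol _ _
    _ = y := imp_imp_eq_of_neg_le_neg neg_invol imp_imp_comm h

theorem neg_antitone : Antitone (neg : G → G) := fun x y h ↦
  le_of_neg_le_neg neg_invol imp_imp_comm (by rwa [neg_invol, neg_invol])

theorem imp_left_antitone (a : G) : Antitone (fun x : G ↦ x ⇝ a) := fun _ _ h ↦
  div_le_div_right (neg_antitone neg_invol imp_imp_comm h) _

theorem imp_imp_eq_of_le {a x : G} (h : a ≤ x) : (x ⇝ a) ⇝ a = x :=
  imp_imp_eq_of_neg_le_neg neg_invol imp_imp_comm (neg_antitone neg_invol imp_imp_comm h)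

end Involutive

end IntegralLeftResiduated

open IntegralLeftResiduated in
theorem stmt_14_general {G : Type*} [PartialOrder G] [IntegralLeftResiduated G]
    (neg_invol : Function.Involutive (neg : G → G))
    (imp_imp_comm : ∀ x y : G, (x ⇝ y) ⇝ y = (y ⇝ x) ⇝ x) (a : G) :
    (∀ x, a ≤ x ⇝ a) ∧ Antitone (fun x : G ↦ x ⇝ a) ∧ ∀ x, a ≤ x → (x ⇝ a) ⇝ a = x :=
  ⟨le_imp neg_invol a, imp_left_antitone neg_invol imp_imp_comm a,
    fun _ ↦ imp_imp_eq_of_le neg_invol imp_imp_comm⟩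

/-- In a bounded integral left-residuated po-groupoid with `¬¬x = x`
and `(x → y) → y = (y → x) → x` (where `x → y = ¬x/¬y`), for every `a` the map
`γ_a : x ↦ x → a` is an antitone involution on the principal filter `[a)`. -/
theorem stmt_14 {G : Type*} [PartialOrder G]
    (mul dvd : G → G → G) (z o : G)
    (hbot : ∀ x, z ≤ x) (htop : ∀ x, x ≤ o)
    (honer : ∀ x, mul x o = x) (honel : ∀ x, mul o x = x)
    (hres : ∀ x y w, mul x y ≤ w ↔ x ≤ dvd w y)
    (neg : G → G) (hneg : ∀ x, neg x = dvd z x)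
    (arr : G → G → G) (harr : ∀ x y, arr x y = dvd (neg x) (neg y))
    (hdn : ∀ x, neg (neg x) = x)
    (hw : ∀ x y, arr (arr x y) y = arr (arr y x) x) :
    ∀ a : G,
      (∀ x, a ≤ arr x a) ∧
      (∀ x y, a ≤ x → x ≤ y → arr y a ≤ arr x a) ∧
      (∀ x, a ≤ x → arr (arr x a) a = x) := by
  obtain rfl : neg = fun x ↦ dvd z x := funext hneg
  obtain rfl : arr = fun x y ↦ dvd (dvd z x) (dvd z y) := funext₂ harr
  let _ : IntegralLeftResiduated G :=
    { mul := mul, div := dvd, zero := z, one := o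
      le_one := htop, one_mul := honel, mul_le_iff_le_div := hres }
  intro a
  obtain ⟨le_imp, imp_antitone, imp_imp⟩ := stmt_14_general hdn hw a
  exact ⟨le_imp, fun _ _ _ hxy ↦ imp_antitone hxy, imp_imp⟩
end

section
/- A commutative (bounded integral) left-residuated po-groupoid G (i.e., one with x·y = y·x for all x, y) satisfies the equation x·y = ¬(¬x/y) for all x, y if and only if it satisfies the contraposition law x/y = ¬y/¬x for all x, y. -/
/-!
Testing against an upper bound `w`, commutativity and residuation turn `x·y ≤ w` into `y ≤ w/x`.
When negation is an involution, they also turn `¬(¬x/y) ≤ w` into `y ≤ ¬x/¬w`. So for involutive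
negations the two laws say the same thing. Setting `y = 1` in either law shows that negation is an
involution.
-/

/-- `dvd` is the left residual of `mul`: `dvd w y`, written `w/y` in the paper, is the largest `x`
with `mul x y ≤ w`. -/
def IsLeftResidual {G : Type*} [LE G] (mul dvd : G → G → G) : Prop :=
  ∀ x y w, mul x y ≤ w ↔ x ≤ dvd w y

namespace IsLeftResidual

section LE

variable {G : Type*} [LE G] {mul dvd : G → G → G} {z : G} {neg : G → G}

theorem mul_le_iff_le_dvd_left (hres : IsLeftResidual mul dvd)
    (hcomm : ∀ x y, mul x y = mul y x) (x y w : G) : mul x y ≤ w ↔ y ≤ dvd w x := by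
  rw [hcomm, hres y x w]

theorem le_neg_comm (hres : IsLeftResidual mul dvd) (hcomm : ∀ x y, mul x y = mul y x)
    (hneg : ∀ x, neg x = dvd z x) (a b : G) : a ≤ neg b ↔ b ≤ neg a := by
  rw [hneg, hneg, ← hres a b z, hres.mul_le_iff_le_dvd_left hcomm]

theorem neg_le_comm (hres : IsLeftResidual mul dvd) (hcomm : ∀ x y, mul x y = mul y x)
    (hneg : ∀ x, neg x = dvd z x) (hinv : Function.Involutive neg) (a b : G) :
    neg a ≤ b ↔ neg b ≤ a := by
  simpa only [hinv a, hinv b] using hres.le_neg_comm hcomm hneg (neg a) (neg b)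

theorem neg_dvd_neg_le_iff (hres : IsLeftResidual mul dvd) (hcomm : ∀ x y, mul x y = mul y x)
    (hneg : ∀ x, neg x = dvd z x) (hinv : Function.Involutive neg) (x y w : G) :
    neg (dvd (neg x) y) ≤ w ↔ y ≤ dvd (neg x) (neg w) :=
  calc
    neg (dvd (neg x) y) ≤ w ↔ neg w ≤ dvd (neg x) y := hres.neg_le_comm hcomm hneg hinv _ _
    _ ↔ mul (neg w) y ≤ neg x := (hres _ _ _).symm
    _ ↔ y ≤ dvd (neg x) (neg w) := hres.mul_le_iff_le_dvd_left hcomm _ _ _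

end LE

section PartialOrder

variable {G : Type*} [PartialOrder G] {mul dvd : G → G → G} {z o : G} {neg : G → G}

theorem dvd_one (hres : IsLeftResidual mul dvd) (honer : ∀ x, mul x o = x) (x : G) :
    dvd x o = x :=
  eq_of_forall_le_iff fun w => by rw [← hres w o x, honer]

theorem mul_eq_iff_contraposition_of_involutive (hres : IsLeftResidual mul dvd)
    (hcomm : ∀ x y, mul x y = mul y x) (hneg : ∀ x, neg x = dvd z x)
    (hinv : Function.Involutive neg) :
    (∀ x y, mul x y = neg (dvd (neg x) y)) ↔ (∀ x y, dvd x y = dvd (neg y) (neg x)) := by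
  constructor
  · intro hmul w x
    refine eq_of_forall_le_iff fun y => ?_
    rw [← hres.mul_le_iff_le_dvd_left hcomm, hmul, hres.neg_dvd_neg_le_iff hcomm hneg hinv]
  · intro hcontra x y
    refine eq_of_forall_ge_iff fun w => ?_
    rw [hres.neg_dvd_neg_le_iff hcomm hneg hinv, ← hcontra, hres.mul_le_iff_le_dvd_left hcomm]

theorem involutive_neg_of_mul_eq (hres : IsLeftResidual mul dvd) (honer : ∀ x, mul x o = x)
    (hmul : ∀ x y, mul x y = neg (dvd (neg x) y)) : Function.Involutive neg := fun x =>
  calc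
    neg (neg x) = neg (dvd (neg x) o) := by rw [hres.dvd_one honer]
    _ = mul x o := (hmul x o).symm
    _ = x := honer x

theorem involutive_neg_of_contraposition (hres : IsLeftResidual mul dvd)
    (honer : ∀ x, mul x o = x) (hneg : ∀ x, neg x = dvd z x)
    (hcontra : ∀ x y, dvd x y = dvd (neg y) (neg x)) : Function.Involutive neg := fun x =>
  have neg_one : neg o = z := by rw [hneg, hres.dvd_one honer]
  calc
    neg (neg x) = dvd (neg o) (neg x) := by rw [neg_one, ← hneg]
    _ = dvd x o := (hcontra x o).symm
    _ = x := hres.dvd_one honer x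

end PartialOrder

end IsLeftResidual

theorem stmt_15_general {G : Type*} [PartialOrder G] {mul dvd : G → G → G} {z o : G}
    (honer : ∀ x, mul x o = x) (hres : IsLeftResidual mul dvd)
    (hcomm : ∀ x y, mul x y = mul y x) {neg : G → G} (hneg : ∀ x, neg x = dvd z x) :
    (∀ x y, mul x y = neg (dvd (neg x) y)) ↔ (∀ x y, dvd x y = dvd (neg y) (neg x)) := by
  have laws_iff := hres.mul_eq_iff_contraposition_of_involutive hcomm hneg
  constructor
  · intro hmul
    exact (laws_iff (hres.involutive_neg_of_mul_eq honer hmul)).1 hmul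
  · intro hcontra
    exact (laws_iff (hres.involutive_neg_of_contraposition honer hneg hcontra)).2 hcontra

/-- A commutative bounded integral left-residuated po-groupoid
satisfies `x·y = ¬(¬x/y)` iff it satisfies the contraposition law `x/y = ¬y/¬x`. -/
theorem stmt_15 {G : Type*} [PartialOrder G]
    (mul dvd : G → G → G) (z o : G)
    (hbot : ∀ x, z ≤ x) (htop : ∀ x, x ≤ o)
    (honer : ∀ x, mul x o = x) (honel : ∀ x, mul o x = x)
    (hres : ∀ x y w, mul x y ≤ w ↔ x ≤ dvd w y)
    (hcomm : ∀ x y, mul x y = mul y x)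
    (neg : G → G) (hneg : ∀ x, neg x = dvd z x) :
    (∀ x y, mul x y = neg (dvd (neg x) y)) ↔
    (∀ x y, dvd x y = dvd (neg y) (neg x)) :=
  stmt_15_general honer hres hcomm hneg
end

section
/- Let G be a (bounded integral) left-residuated po-groupoid. (i) If G satisfies the contraposition law x/y = ¬y/¬x for all x, y, then G satisfies the double negation law ¬¬x = x. (ii) If in addition the underlying poset of G is a lattice, G is commutative (x·y = y·x), and G satisfies the skew divisibility law (¬y/¬x)·y = x ⊓ y for all x, y (where ⊓ is the lattice meet), then G satisfies the contraposition law x/y = ¬y/¬x and the divisibility law (x/y)·y = x ⊓ y. -/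
/-!
Negation turns the unit `1` into `0`, because `x / 1 = x`. Hence the contraposition law at `y = 1`
reads `x = ¬¬x`, and so does skew divisibility at `y = 1`, where the meet is `x ⊓ 1 = x`.
Skew divisibility also gives `(¬y / ¬x) · y ≤ x`, that is `¬y / ¬x ≤ x / y`; since `¬` is an
involution, replacing `(x, y)` by `(¬y, ¬x)` yields the reverse inequality. Contraposition then
turns skew divisibility into divisibility.
-/

namespace LeftResiduated

variable {G : Type*} {mul div : G → G → G} {neg : G → G} {zero one : G}

theorem neg_neg_of_contraposition (div_one : ∀ x, div x one = x)
    (neg_eq : ∀ x, neg x = div zero x)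
    (contraposition : ∀ x y, div x y = div (neg y) (neg x)) (x : G) :
    neg (neg x) = x :=
  calc
    neg (neg x) = div (neg one) (neg x) := by rw [neg_eq one, div_one, ← neg_eq]
    _ = div x one := (contraposition x one).symm
    _ = x := div_one x

variable [PartialOrder G]

theorem div_one_eq_self (mul_one : ∀ x, mul x one = x)
    (mul_le_iff_le_div : ∀ x y w, mul x y ≤ w ↔ x ≤ div w y) (x : G) :
    div x one = x :=
  eq_of_forall_le_iff fun w => by rw [← mul_le_iff_le_div, mul_one]

theorem neg_neg_of_skew_divisibility (le_one : ∀ x, x ≤ one) (mul_one : ∀ x, mul x one = x)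
    (div_one : ∀ x, div x one = x) (neg_eq : ∀ x, neg x = div zero x)
    (skew : ∀ x y, IsGLB {x, y} (mul (div (neg y) (neg x)) y)) (x : G) :
    neg (neg x) = x := by
  have neg_neg_isGLB : IsGLB {x, one} (neg (neg x)) := by
    simpa only [mul_one, neg_eq one, div_one, ← neg_eq] using skew x one
  have self_isLeast : IsLeast {x, one} x := by simp [IsLeast, le_one]
  exact neg_neg_isGLB.unique self_isLeast.isGLB

theorem contraposition_of_neg_neg (neg_neg : ∀ x, neg (neg x) = x)
    (div_neg_le : ∀ x y, div (neg y) (neg x) ≤ div x y) (x y : G) :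
    div x y = div (neg y) (neg x) := by
  refine le_antisymm ?_ (div_neg_le x y)
  simpa only [neg_neg] using div_neg_le (neg y) (neg x)

end LeftResiduated

open LeftResiduated in
theorem stmt_16_general {G : Type*} [PartialOrder G] (mul div : G → G → G) (zero one : G)
    (le_one : ∀ x, x ≤ one) (mul_one : ∀ x, mul x one = x)
    (mul_le_iff_le_div : ∀ x y w, mul x y ≤ w ↔ x ≤ div w y)
    (neg : G → G) (neg_eq : ∀ x, neg x = div zero x) :
    ((∀ x y, div x y = div (neg y) (neg x)) → ∀ x, neg (neg x) = x) ∧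
    ((∀ x y, IsGLB {x, y} (mul (div (neg y) (neg x)) y)) →
      (∀ x y, div x y = div (neg y) (neg x)) ∧
      (∀ x y, IsGLB {x, y} (mul (div x y) y))) := by
  have div_one := div_one_eq_self mul_one mul_le_iff_le_div
  refine ⟨neg_neg_of_contraposition div_one neg_eq, fun skew => ?_⟩
  have neg_neg := neg_neg_of_skew_divisibility le_one mul_one div_one neg_eq skew
  have div_neg_le (x y : G) : div (neg y) (neg x) ≤ div x y :=
    (mul_le_iff_le_div _ _ _).1 ((skew x y).1 (Set.mem_insert x {y}))
  have contraposition := contraposition_of_neg_neg neg_neg div_neg_le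
  exact ⟨contraposition, fun x y => contraposition x y ▸ skew x y⟩

/-- (i) In a bounded integral left-residuated po-groupoid, the
contraposition law `x/y = ¬y/¬x` implies the double negation law `¬¬x = x`.
(ii) If moreover the underlying poset is a lattice, `G` is commutative and
satisfies skew divisibility `(¬y/¬x)·y = x ⊓ y`, then `G` satisfies the
contraposition law and the divisibility law `(x/y)·y = x ⊓ y`. -/
theorem stmt_16 {G : Type*} [PartialOrder G]
    (mul dvd : G → G → G) (z o : G)
    (hbot : ∀ x, z ≤ x) (htop : ∀ x, x ≤ o)
    (honer : ∀ x, mul x o = x) (honel : ∀ x, mul o x = x)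
    (hres : ∀ x y w, mul x y ≤ w ↔ x ≤ dvd w y)
    (neg : G → G) (hneg : ∀ x, neg x = dvd z x) :
    ((∀ x y, dvd x y = dvd (neg y) (neg x)) → ∀ x, neg (neg x) = x) ∧
    (∀ inf sup : G → G → G,
      (∀ x y, IsGLB ({x, y} : Set G) (inf x y)) →
      (∀ x y, IsLUB ({x, y} : Set G) (sup x y)) →
      (∀ x y, mul x y = mul y x) →
      (∀ x y, mul (dvd (neg y) (neg x)) y = inf x y) →
      (∀ x y, dvd x y = dvd (neg y) (neg x)) ∧
      (∀ x y, mul (dvd x y) y = inf x y)) := by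
  obtain ⟨double_negation, of_skew⟩ := stmt_16_general mul dvd z o htop honer hres neg hneg
  refine ⟨double_negation, fun inf _ hinf _ _ skew => ?_⟩
  obtain ⟨contraposition, divisibility⟩ := of_skew fun x y => skew x y ▸ hinf x y
  exact ⟨contraposition, fun x y => (divisibility x y).unique (hinf x y)⟩
end

section
/- On the real unit interval A = [0,1], define ¬x = √(1 − x²) and define the multiplication x·y = x if y = 1, and x·y = max(y − ¬x, 0) if y < 1. Then: (i) the multiplication is monotone in the left argument on the left, i.e., for all x, y, z ∈ A, x ≤ y implies z·x ≤ z·y; and (ii) for every x ∈ A with 0 < x < 1, setting y = 1 − √(1 − x²), there is no element b ∈ A such that for all z ∈ A, x·z ≤ y if and only if z ≤ b (i.e., the multiplication admits no right residuum). -/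
/-!
For fixed `x`, the map `x·_` is the truncated translation `y ↦ max (y - ¬x) 0` on `[0,1)`, which
is at most `1 - ¬x` there, and it takes the value `x` at `1`. Monotonicity amounts to `1 - ¬x ≤ x`.
When `0 < x < 1` this inequality is strict, so that `x·_` jumps at `1`: the elements `z` with
`x·z ≤ 1 - ¬x` are exactly those of `[0,1)`, a set without a greatest element.
-/

section TruncatedTranslation

open Set

theorem not_exists_forall_mem_Icc_iff_le {α : Type*} [LinearOrder α] [DenselyOrdered α]
    {a t : α} {p : α → Prop} (hp : ∀ z ∈ Ico a t, p z) (hpt : ¬ p t) :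
    ¬ ∃ b ∈ Icc a t, ∀ z ∈ Icc a t, (p z ↔ z ≤ b) := by
  rintro ⟨b, ⟨hab, hbt⟩, hb⟩
  have hb_lt : b < t := not_le.1 fun htb => hpt ((hb t ⟨hab.trans hbt, le_rfl⟩).2 htb)
  obtain ⟨z, hbz, hzt⟩ := exists_between hb_lt
  have haz : a ≤ z := hab.trans hbz.le
  exact hbz.not_ge ((hb z ⟨haz, hzt.le⟩).1 (hp z ⟨haz, hzt⟩))

variable {α : Type*} [AddCommGroup α] [LinearOrder α] [IsOrderedAddMonoid α]
  {f : α → α} {c t : α}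

theorem monotoneOn_Iic_of_eqOn_max_sub (hf : EqOn f (fun y => max (y - c) 0) (Iio t))
    (h_nonneg : 0 ≤ f t) (h_sub_le : t - c ≤ f t) : MonotoneOn f (Iic t) := by
  have h_mono : Monotone fun y : α => max (y - c) 0 :=
    fun _ _ hyz => max_le_max_right 0 (sub_le_sub_right hyz c)
  rw [← Iio_insert, monotoneOn_insert_iff]
  refine ⟨fun y hy hyt => ?_, fun y hy hty => absurd hty (not_le.2 hy),
    (h_mono.monotoneOn _).congr hf.symm⟩
  rw [hf hy]
  exact max_le ((sub_le_sub_right hyt c).trans h_sub_le) h_nonneg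

theorem not_exists_residuum_of_eqOn_max_sub [DenselyOrdered α]
    (hf : EqOn f (fun y => max (y - c) 0) (Iio t)) (hct : c ≤ t) (h_jump : t - c < f t) (a : α) :
    ¬ ∃ b ∈ Icc a t, ∀ z ∈ Icc a t, (f z ≤ t - c ↔ z ≤ b) := by
  refine not_exists_forall_mem_Icc_iff_le (fun z hz => ?_) h_jump.not_ge
  rw [hf hz.2]
  exact max_le (sub_le_sub_right hz.2.le c) (sub_nonneg.2 hct)

end TruncatedTranslation

theorem one_sub_le_sqrt_one_sub_sq {x : ℝ} (hx0 : 0 ≤ x) (hx1 : x ≤ 1) :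
    1 - x ≤ √(1 - x ^ 2) :=
  Real.le_sqrt_of_sq_le (by nlinarith)

theorem one_sub_lt_sqrt_one_sub_sq {x : ℝ} (hx0 : 0 < x) (hx1 : x < 1) :
    1 - x < √(1 - x ^ 2) :=
  Real.lt_sqrt_of_sq_lt (by nlinarith)

/-- On `A = [0,1] ⊆ ℝ`, with `¬x = √(1 - x²)` and `x·y = x` if
`y = 1`, `x·y = max (y - ¬x) 0` if `y < 1`: (i) multiplication is monotone on the
left; (ii) for `0 < x < 1` and `y = 1 - √(1 - x²)`, there is no right residuum
`b ∈ A` with `x·z ≤ y ↔ z ≤ b` for all `z ∈ A`. -/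
theorem stmt_19
    (neg : ℝ → ℝ) (hneg : ∀ x, neg x = Real.sqrt (1 - x ^ 2))
    (mul : ℝ → ℝ → ℝ)
    (hmul1 : ∀ x, mul x 1 = x)
    (hmul2 : ∀ x y, y < 1 → mul x y = max (y - neg x) 0) :
    (∀ x y w, x ∈ Set.Icc (0 : ℝ) 1 → y ∈ Set.Icc (0 : ℝ) 1 →
      w ∈ Set.Icc (0 : ℝ) 1 → x ≤ y → mul w x ≤ mul w y) ∧
    (∀ x ∈ Set.Icc (0 : ℝ) 1, 0 < x → x < 1 →
      ¬ ∃ b ∈ Set.Icc (0 : ℝ) 1,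
        ∀ w ∈ Set.Icc (0 : ℝ) 1, (mul x w ≤ 1 - Real.sqrt (1 - x ^ 2) ↔ w ≤ b)) := by
  have mul_eqOn (x : ℝ) : Set.EqOn (mul x) (fun y => max (y - √(1 - x ^ 2)) 0) (Set.Iio 1) :=
    fun y hy => by rw [hmul2 x y hy, hneg]
  refine ⟨fun x y w hx hy hw hxy => ?_, fun x _ hx0 hx1 => ?_⟩
  · have h_sub_le : 1 - √(1 - w ^ 2) ≤ mul w 1 := by
      linarith [hmul1 w, one_sub_le_sqrt_one_sub_sq hw.1 hw.2]
    have h_nonneg : 0 ≤ mul w 1 := hw.1.trans_eq (hmul1 w).symm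
    exact monotoneOn_Iic_of_eqOn_max_sub (mul_eqOn w) h_nonneg h_sub_le hx.2 hy.2 hxy
  · have h_jump : 1 - √(1 - x ^ 2) < mul x 1 := by
      linarith [hmul1 x, one_sub_lt_sqrt_one_sub_sq hx0 hx1]
    have h_neg_le_one : √(1 - x ^ 2) ≤ 1 :=
      Real.sqrt_le_one.2 (sub_le_self 1 (sq_nonneg x))
    exact not_exists_residuum_of_eqOn_max_sub (mul_eqOn x) h_neg_le_one h_jump 0
end
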